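/- Fix n ≥ 3. If the functor St(n,−) satisfies the Tulenbaev lifting property, then it satisfies the dilation principle: for every commutative ring A, every non-nilpotent a ∈ A, and every g ∈ St(n, A[X]) with (ev_{X=0})_*(g) = 1 ∈ St(n,A) and (λ_a)_*(g) = 1 ∈ St(n, A_a[X]), there exists m ≥ 0 such that (ev_{X=a^mY})_*(g) = 1 ∈ St(n, A[Y]), where ev_{X=a^mY} : A[X] → A[Y] is the A-algebra map sending X to a^mY. -/

import Mathlib

open scoped commutatorElement

/-- Generators of the Steinberg group: triples (i,j,r) with i ≠ j. -/
abbrev StGen (n : ℕ) (R : Type) : Type := {p : Fin n × Fin n // p.1 ≠ p.2} × R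

/-- The Steinberg relations. -/
inductive StRels (n : ℕ) (R : Type) [CommRing R] : FreeGroup (StGen n R) → Prop
  | add (i j : Fin n) (hij : i ≠ j) (r s : R) :
      StRels n R (FreeGroup.of (⟨(i, j), hij⟩, r) * FreeGroup.of (⟨(i, j), hij⟩, s) *
        (FreeGroup.of (⟨(i, j), hij⟩, r + s))⁻¹)
  | commZero (i j h k : Fin n) (hij : i ≠ j) (hhk : h ≠ k) (hjh : j ≠ h) (hik : i ≠ k) (r s : R) :
      StRels n R ⁅(FreeGroup.of (⟨(i, j), hij⟩, r) : FreeGroup (StGen n R)), FreeGroup.of (⟨(h, k), hhk⟩, s)⁆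
  | commAdd (i j k : Fin n) (hij : i ≠ j) (hjk : j ≠ k) (hik : i ≠ k) (r s : R) :
      StRels n R (⁅(FreeGroup.of (⟨(i, j), hij⟩, r) : FreeGroup (StGen n R)), FreeGroup.of (⟨(j, k), hjk⟩, s)⁆ *
        (FreeGroup.of (⟨(i, k), hik⟩, r * s))⁻¹)

/-- The Steinberg group `St(n, R)`. -/
abbrev SteinbergGroup (n : ℕ) (R : Type) [CommRing R] : Type :=
  PresentedGroup {w | StRels n R w}

/-- The generator `x_{ij}(r)` of the Steinberg group. -/
def stx (n : ℕ) (R : Type) [CommRing R] (i j : Fin n) (hij : i ≠ j) (r : R) :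
    SteinbergGroup n R :=
  PresentedGroup.of (⟨(i, j), hij⟩, r)

/-- The fiber product ring `R ⋉ XR_a[X] = {(r, h) : h(0) = λ_a r}`. -/
def fiberRing (R : Type) [CommRing R] (a : R) :
    Subring (R × Polynomial (Localization.Away a)) where
  carrier := {p | Polynomial.eval 0 p.2 = algebraMap R (Localization.Away a) p.1}
  zero_mem' := by simp
  one_mem' := by simp
  add_mem' := by
    intro x y hx hy
    simp only [Set.mem_setOf_eq, Prod.snd_add, Polynomial.eval_add, Prod.fst_add, map_add] at *
    rw [hx, hy]
  neg_mem' := by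
    intro x hx
    simp only [Set.mem_setOf_eq, Prod.snd_neg, Polynomial.eval_neg, Prod.fst_neg, map_neg] at *
    rw [hx]
  mul_mem' := by
    intro x y hx hy
    simp only [Set.mem_setOf_eq, Prod.snd_mul, Polynomial.eval_mul, Prod.fst_mul, map_mul] at *
    rw [hx, hy]

/-- The Tulenbaev lifting property for the functor `St(n, -)`. -/
def TulenbaevLifting (n : ℕ) : Prop :=
  ∀ (R : Type) [CommRing R] (a : R), ¬ IsNilpotent a →
  ∀ (pSt : SteinbergGroup n (fiberRing R a) →* SteinbergGroup n R),
    (∀ (i j : Fin n) (hij : i ≠ j) (x : fiberRing R a),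
      pSt (stx n (fiberRing R a) i j hij x) = stx n R i j hij x.val.1) →
  ∀ (μSt : SteinbergGroup n (fiberRing R a) →*
      SteinbergGroup n (Polynomial (Localization.Away a))),
    (∀ (i j : Fin n) (hij : i ≠ j) (x : fiberRing R a),
      μSt (stx n (fiberRing R a) i j hij x) =
        stx n (Polynomial (Localization.Away a)) i j hij x.val.2) →
  ∀ (ev0 : SteinbergGroup n (Polynomial (Localization.Away a)) →*
      SteinbergGroup n (Localization.Away a)),
    (∀ (i j : Fin n) (hij : i ≠ j) (p : Polynomial (Localization.Away a)),
      ev0 (stx n (Polynomial (Localization.Away a)) i j hij p) =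
        stx n (Localization.Away a) i j hij (Polynomial.eval 0 p)) →
  ∃ T : ev0.ker →* SteinbergGroup n (fiberRing R a),
    (∀ g : ev0.ker, μSt (T g) = (g : SteinbergGroup n (Polynomial (Localization.Away a)))) ∧
    (∀ h : SteinbergGroup n (fiberRing R a), pSt h = 1 →
      ∀ hm : μSt h ∈ ev0.ker, T ⟨μSt h, hm⟩ = h)

/-- The dilation principle for the functor `St(n, -)`. -/
def DilationPrinciple (n : ℕ) : Prop :=
  ∀ (A : Type) [CommRing A] (a : A), ¬ IsNilpotent a →
  ∀ g : SteinbergGroup n (Polynomial A),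
  ∀ (ev0 : SteinbergGroup n (Polynomial A) →* SteinbergGroup n A),
    (∀ (i j : Fin n) (hij : i ≠ j) (p : Polynomial A),
      ev0 (stx n (Polynomial A) i j hij p) = stx n A i j hij (Polynomial.eval 0 p)) →
    ev0 g = 1 →
  ∀ (la : SteinbergGroup n (Polynomial A) →*
      SteinbergGroup n (Polynomial (Localization.Away a))),
    (∀ (i j : Fin n) (hij : i ≠ j) (p : Polynomial A),
      la (stx n (Polynomial A) i j hij p) =
        stx n (Polynomial (Localization.Away a)) i j hij
          (p.map (algebraMap A (Localization.Away a)))) →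
    la g = 1 →
  ∃ m : ℕ, ∀ (ev : SteinbergGroup n (Polynomial A) →* SteinbergGroup n (Polynomial A)),
    (∀ (i j : Fin n) (hij : i ≠ j) (p : Polynomial A),
      ev (stx n (Polynomial A) i j hij p) =
        stx n (Polynomial A) i j hij (p.comp (Polynomial.C (a ^ m) * Polynomial.X))) →
    ev g = 1

/-!
Dilating by powers of `a` turns `A[X]` into a directed system `A[X] → A[X] → ⋯` with all transition
maps `X ↦ aX`. Its direct limit is `A ⋉ XA_a[X]`: the `N`-th copy maps there by
`p ↦ (p(0), p(a⁻ᴺX))`. A Tulenbaev lift forces an element of `St(n, A ⋉ XA_a[X])` to be trivial as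
soon as both of its projections are, so `g` dies in `St(n, A ⋉ XA_a[X])`. Being defined by
generators and relations, `St(n, -)` commutes with direct limits of rings, hence `g` already dies
at a finite stage, which says that `X ↦ aᵐX` kills it.
-/

section Steinberg

variable {n : ℕ}

section Relations

variable {R : Type} [CommRing R]

theorem stx_mul_stx (i j : Fin n) (hij : i ≠ j) (r s : R) :
    stx n R i j hij r * stx n R i j hij s = stx n R i j hij (r + s) :=
  PresentedGroup.mk_eq_mk_of_mul_inv_mem (StRels.add i j hij r s)

theorem commutatorElement_stx_of_ne {i j h k : Fin n} (hij : i ≠ j) (hhk : h ≠ k) (hjh : j ≠ h)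
    (hik : i ≠ k) (r s : R) : ⁅stx n R i j hij r, stx n R h k hhk s⁆ = 1 :=
  PresentedGroup.one_of_mem (StRels.commZero i j h k hij hhk hjh hik r s)

theorem commutatorElement_stx {i j k : Fin n} (hij : i ≠ j) (hjk : j ≠ k) (hik : i ≠ k) (r s : R) :
    ⁅stx n R i j hij r, stx n R j k hjk s⁆ = stx n R i k hik (r * s) :=
  PresentedGroup.mk_eq_mk_of_mul_inv_mem (StRels.commAdd i j k hij hjk hik r s)

end Relations

namespace SteinbergGroup

section Lift

variable {R : Type} [CommRing R] {G : Type*} [Group G]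

theorem hom_ext {F₁ F₂ : SteinbergGroup n R →* G}
    (h : ∀ i j hij r, F₁ (stx n R i j hij r) = F₂ (stx n R i j hij r)) : F₁ = F₂ :=
  PresentedGroup.ext fun ⟨⟨⟨i, j⟩, hij⟩, r⟩ ↦ h i j hij r

/-- A family `x_{ij}(r)` of elements of a group satisfies the Steinberg relations. -/
structure IsSteinbergFamily (x : ∀ i j : Fin n, i ≠ j → R → G) : Prop where
  mul_eq_add : ∀ i j hij r s, x i j hij r * x i j hij s = x i j hij (r + s)
  commutator_eq_one : ∀ i j h k hij hhk, j ≠ h → i ≠ k →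
    ∀ r s, ⁅x i j hij r, x h k hhk s⁆ = 1
  commutator_eq_mul : ∀ i j k hij hjk hik r s, ⁅x i j hij r, x j k hjk s⁆ = x i k hik (r * s)

variable {x : ∀ i j : Fin n, i ≠ j → R → G}

theorem IsSteinbergFamily.freeGroupLift_eq_one (hx : IsSteinbergFamily x)
    (w : FreeGroup (StGen n R)) (hw : StRels n R w) :
    FreeGroup.lift (fun y : StGen n R ↦ x y.1.1.1 y.1.1.2 y.1.2 y.2) w = 1 := by
  cases hw with
  | add i j hij r s =>
    simp only [map_mul, map_inv, FreeGroup.lift_apply_of, hx.mul_eq_add, mul_inv_cancel]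
  | commZero i j h k hij hhk hjh hik r s =>
    simpa only [map_commutatorElement, FreeGroup.lift_apply_of]
      using hx.commutator_eq_one i j h k hij hhk hjh hik r s
  | commAdd i j k hij hjk hik r s =>
    simp only [map_mul, map_inv, map_commutatorElement, FreeGroup.lift_apply_of,
      hx.commutator_eq_mul i j k hij hjk hik, mul_inv_cancel]

variable (hx : IsSteinbergFamily x)

/-- The universal property of the Steinberg group: a family of elements satisfying the Steinberg
relations extends to a homomorphism out of `St(n, R)`. -/
def lift : SteinbergGroup n R →* G :=
  PresentedGroup.toGroup hx.freeGroupLift_eq_one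

theorem lift_stx (i j : Fin n) (hij : i ≠ j) (r : R) :
    lift hx (stx n R i j hij r) = x i j hij r :=
  PresentedGroup.toGroup.of _

end Lift

section Map

variable {R S T : Type} [CommRing R] [CommRing S] [CommRing T]

theorem isSteinbergFamily_stx_comp (φ : R →+* S) :
    IsSteinbergFamily fun (i j : Fin n) hij r ↦ stx n S i j hij (φ r) where
  mul_eq_add _ _ _ _ _ := by rw [stx_mul_stx, map_add]
  commutator_eq_one _ _ _ _ hij hhk hjh hik _ _ :=
    commutatorElement_stx_of_ne hij hhk hjh hik _ _
  commutator_eq_mul _ _ _ hij hjk hik _ _ := by rw [commutatorElement_stx hij hjk hik, map_mul]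

variable (n) in
/-- The homomorphism `φ_* : St(n, R) → St(n, S)` induced by a ring homomorphism `φ`. -/
def map (φ : R →+* S) : SteinbergGroup n R →* SteinbergGroup n S :=
  lift (isSteinbergFamily_stx_comp φ)

theorem map_stx (φ : R →+* S) (i j : Fin n) (hij : i ≠ j) (r : R) :
    map n φ (stx n R i j hij r) = stx n S i j hij (φ r) :=
  lift_stx ..

theorem eq_map {φ : R →+* S} {F : SteinbergGroup n R →* SteinbergGroup n S}
    (hF : ∀ i j hij r, F (stx n R i j hij r) = stx n S i j hij (φ r)) : F = map n φ :=
  hom_ext fun i j hij r ↦ by rw [hF, map_stx]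

theorem map_id : map n (RingHom.id R) = MonoidHom.id _ :=
  (eq_map fun _ _ _ _ ↦ rfl).symm

theorem map_comp (ψ : S →+* T) (φ : R →+* S) : map n (ψ.comp φ) = (map n ψ).comp (map n φ) :=
  (eq_map fun _ _ _ _ ↦ by rw [MonoidHom.comp_apply, map_stx, map_stx, RingHom.comp_apply]).symm

theorem map_map (ψ : S →+* T) (φ : R →+* S) (g : SteinbergGroup n R) :
    map n ψ (map n φ g) = map n (ψ.comp φ) g := by
  rw [map_comp, MonoidHom.comp_apply]

end Map

section DirectLimit

variable {ι : Type} [Preorder ι] {R : ι → Type} [∀ k, CommRing (R k)]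
  {f : ∀ k l, k ≤ l → R k →+* R l} [DirectedSystem R (f · · ·)]

instance directedSystem_map :
    DirectedSystem (fun k ↦ SteinbergGroup n (R k)) (fun _ _ hkl ↦ map n (f _ _ hkl)) where
  map_self k g := by
    have hf : f k k le_rfl = RingHom.id _ := RingHom.ext fun r ↦ DirectedSystem.map_self' f r
    rw [hf, map_id, MonoidHom.id_apply]
  map_map l k j hjk hkl g := by
    have hf : (f k l hkl).comp (f j k hjk) = f j l (hjk.trans hkl) :=
      RingHom.ext (DirectedSystem.map_map' f hjk hkl)
    rw [map_map, hf]

variable [IsDirectedOrder ι]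

variable (n f) in
/-- The direct limit of the groups `St(n, R_k)` over a directed system of rings `R_k`. -/
abbrev directLimit : Type :=
  DirectLimit (fun k ↦ SteinbergGroup n (R k)) (fun _ _ hkl ↦ map n (f _ _ hkl))

variable (n f) in
/-- The family `x_{ij}([r]) := [x_{ij}(r)]` in the direct limit of the groups `St(n, R_k)`. -/
noncomputable def directLimitStx (i j : Fin n) (hij : i ≠ j) : DirectLimit R f → directLimit n f :=
  DirectLimit.map f _ (fun k ↦ stx n (R k) i j hij) fun _ _ _ r ↦ map_stx _ i j hij r

variable [Nonempty ι]

variable (n f) in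
/-- The canonical homomorphism from `St(n, R_k)` to the direct limit of these groups. -/
noncomputable def ofStage (k : ι) : SteinbergGroup n (R k) →* directLimit n f where
  toFun g := ⟦⟨k, g⟩⟧
  map_one' := (DirectLimit.one_def k).symm
  map_mul' g h := by rw [DirectLimit.mul_def]

theorem directLimitStx_mk (i j : Fin n) (hij : i ≠ j) (k : ι) (r : R k) :
    directLimitStx n f i j hij ⟦⟨k, r⟩⟧ = ofStage n f k (stx n (R k) i j hij r) :=
  rfl

theorem isSteinbergFamily_directLimitStx : IsSteinbergFamily (directLimitStx n f) where
  mul_eq_add i j hij := DirectLimit.induction₂ f fun k r s ↦ by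
    rw [DirectLimit.add_def]
    simp only [directLimitStx_mk]
    rw [← map_mul, stx_mul_stx]
  commutator_eq_one i j h k hij hhk hjh hik := DirectLimit.induction₂ f fun l r s ↦ by
    simp only [directLimitStx_mk]
    rw [← map_commutatorElement, commutatorElement_stx_of_ne hij hhk hjh hik, map_one]
  commutator_eq_mul i j k hij hjk hik := DirectLimit.induction₂ f fun l r s ↦ by
    rw [DirectLimit.mul_def]
    simp only [directLimitStx_mk]
    rw [← map_commutatorElement, commutatorElement_stx hij hjk hik]

/-- The comparison map `St(n, colim R_k) → colim St(n, R_k)`. -/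
noncomputable def toDirectLimit : SteinbergGroup n (DirectLimit R f) →* directLimit n f :=
  lift isSteinbergFamily_directLimitStx

theorem toDirectLimit_comp_map_of (k : ι) :
    toDirectLimit.comp (map n (DirectLimit.Ring.of R f k)) = ofStage n f k :=
  hom_ext fun i j hij r ↦ by
    rw [MonoidHom.comp_apply, map_stx, toDirectLimit, lift_stx, DirectLimit.Ring.of_apply,
      directLimitStx_mk]

theorem exists_map_eq_one_of_map_of_eq_one {k : ι} {g : SteinbergGroup n (R k)}
    (hg : map n (DirectLimit.Ring.of R f k) g = 1) : ∃ l hkl, map n (f k l hkl) g = 1 := by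
  have hofStage : ofStage n f k g = 1 := by
    rw [← toDirectLimit_comp_map_of, MonoidHom.comp_apply, hg, map_one]
  exact (DirectLimit.exists_eq_one (G := fun k ↦ SteinbergGroup n (R k))
    (f := fun _ _ hkl ↦ map n (f _ _ hkl)) ⟨k, g⟩).1 hofStage

end DirectLimit

end SteinbergGroup

end Steinberg

section FiberRing

open Polynomial

/-- The dilation `X ↦ cX` of a polynomial ring. -/
noncomputable def dilation {R : Type*} [CommSemiring R] (c : R) : R[X] →+* R[X] :=
  compRingHom (C c * X)

section Dilation

variable {R S : Type*} [CommSemiring R] [CommSemiring S]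

theorem coeff_dilation (c : R) (p : R[X]) (k : ℕ) : (dilation c p).coeff k = p.coeff k * c ^ k :=
  comp_C_mul_X_coeff

theorem dilation_one : dilation (1 : R) = RingHom.id R[X] :=
  RingHom.ext fun p ↦ by ext k; simp [coeff_dilation]

theorem dilation_dilation (c d : R) (p : R[X]) :
    dilation c (dilation d p) = dilation (c * d) p := by
  ext k
  rw [coeff_dilation, coeff_dilation, coeff_dilation, mul_pow, mul_assoc, mul_comm (d ^ k)]

theorem dilation_C (c r : R) : dilation c (C r) = C r :=
  C_comp

theorem dilation_X (c : R) : dilation c X = C c * X :=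
  X_comp

theorem map_dilation (φ : R →+* S) (c : R) (p : R[X]) :
    (dilation c p).map φ = dilation (φ c) (p.map φ) := by
  ext k
  simp [coeff_dilation]

theorem eval_zero_dilation (c : R) (p : R[X]) : (dilation c p).eval 0 = p.eval 0 := by
  simp [← coeff_zero_eq_eval_zero, coeff_dilation]

end Dilation

section DilationSystem

variable {A : Type*} [CommSemiring A]

/-- The transition maps of the directed system `A[X] → A[X] → ⋯` in which every step is the dilation
`X ↦ aX`. -/
noncomputable def dilationSystem (a : A) (i j : ℕ) (_ : i ≤ j) : A[X] →+* A[X] :=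
  dilation (a ^ (j - i))

instance directedSystem_dilationSystem (a : A) :
    DirectedSystem (fun _ : ℕ ↦ A[X]) (dilationSystem a · · ·) where
  map_self i p := by
    simp only [dilationSystem, Nat.sub_self, pow_zero, dilation_one, RingHom.id_apply]
  map_map k j i hij hjk p := by
    simp only [dilationSystem, dilation_dilation, ← pow_add, Nat.sub_add_sub_cancel hjk hij]

end DilationSystem

section Away

variable {A S : Type*} [CommSemiring A] (a : A) [CommSemiring S] [Algebra A S]
  [IsLocalization.Away a S]

attribute [local instance] Polynomial.algebra Polynomial.isLocalization

theorem exists_map_eq_C_pow_mul (p : S[X]) :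
    ∃ N : ℕ, ∃ q : A[X], q.map (algebraMap A S) = C (algebraMap A S a ^ N) * p := by
  obtain ⟨⟨_, _, ⟨N, rfl⟩, rfl⟩, q, hq⟩ :=
    IsLocalization.exists_integer_multiple ((Submonoid.powers a).map C) p
  exact ⟨N, q, by simpa [Algebra.smul_def] using hq⟩

theorem exists_C_pow_mul_eq_zero {p : A[X]} (hp : p.map (algebraMap A S) = 0) :
    ∃ k : ℕ, C (a ^ k) * p = 0 := by
  obtain ⟨⟨_, _, ⟨k, rfl⟩, rfl⟩, hk⟩ :=
    (IsLocalization.map_eq_zero_iff ((Submonoid.powers a).map C) S[X] p).1 hp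
  exact ⟨k, hk⟩

theorem exists_dilation_pow_eq_zero {p : A[X]} (hp₀ : p.eval 0 = 0)
    (hp : p.map (algebraMap A S) = 0) : ∃ k : ℕ, dilation (a ^ k) p = 0 := by
  obtain ⟨k, hk⟩ := exists_C_pow_mul_eq_zero a hp
  refine ⟨k, ?_⟩
  ext (_ | i)
  · rw [coeff_dilation, coeff_zero_eq_eval_zero, hp₀, zero_mul, coeff_zero]
  · have hcoeff : a ^ k * p.coeff (i + 1) = 0 := by rw [← coeff_C_mul, hk, coeff_zero]
    rw [coeff_dilation, pow_succ', ← mul_assoc, mul_comm (p.coeff _), hcoeff, zero_mul, coeff_zero]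

end Away

namespace fiberRing

variable {A : Type} [CommRing A] (a : A)

/-- The projection `p : A ⋉ XA_a[X] → A`. -/
noncomputable def fst : fiberRing A a →+* A :=
  (RingHom.fst A (Localization.Away a)[X]).comp (fiberRing A a).subtype

/-- The projection `μ : A ⋉ XA_a[X] → A_a[X]`. -/
noncomputable def snd : fiberRing A a →+* (Localization.Away a)[X] :=
  (RingHom.snd A (Localization.Away a)[X]).comp (fiberRing A a).subtype

variable {a} in
theorem ext {x y : fiberRing A a} (hfst : fst a x = fst a y) (hsnd : snd a x = snd a y) : x = y :=
  Subtype.ext (Prod.ext hfst hsnd)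

theorem eval_zero_snd (x : fiberRing A a) :
    (snd a x).eval 0 = algebraMap A (Localization.Away a) (fst a x) :=
  x.2

/-- The map `A[X] → A ⋉ XA_a[X]`, `p ↦ (p(0), p(a⁻ᴺX))`, out of the `N`-th stage of
`dilationSystem a`. -/
noncomputable def ofStage (N : ℕ) : A[X] →+* fiberRing A a :=
  RingHom.codRestrict
    ((evalRingHom 0).prod ((dilation (IsLocalization.Away.invSelf a ^ N)).comp
      (mapRingHom (algebraMap A (Localization.Away a)))))
    (fiberRing A a) fun p ↦ by
      change (dilation _ (p.map _)).eval 0 = algebraMap _ _ (p.eval 0)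
      rw [eval_zero_dilation, ← map_zero (algebraMap A _), eval_map_apply]

theorem fst_ofStage (N : ℕ) (p : A[X]) : fst a (ofStage a N p) = p.eval 0 :=
  rfl

theorem snd_ofStage (N : ℕ) (p : A[X]) :
    snd a (ofStage a N p) = dilation (IsLocalization.Away.invSelf a ^ N)
      (p.map (algebraMap A (Localization.Away a))) :=
  rfl

theorem fst_comp_ofStage (N : ℕ) : (fst a).comp (ofStage a N) = evalRingHom 0 :=
  rfl

theorem snd_comp_ofStage_zero :
    (snd a).comp (ofStage a 0) = mapRingHom (algebraMap A (Localization.Away a)) :=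
  RingHom.ext fun p ↦ by
    rw [RingHom.comp_apply, snd_ofStage, pow_zero, dilation_one, RingHom.id_apply,
      coe_mapRingHom]

theorem map_eq_dilation_snd_ofStage (N : ℕ) (p : A[X]) :
    p.map (algebraMap A (Localization.Away a)) =
      dilation (algebraMap A (Localization.Away a) a ^ N) (snd a (ofStage a N p)) := by
  rw [snd_ofStage, dilation_dilation, ← mul_pow, IsLocalization.Away.mul_invSelf, one_pow,
    dilation_one, RingHom.id_apply]

theorem snd_ofStage_dilation (N : ℕ) (p : A[X]) :
    snd a (ofStage a N (dilation (a ^ N) p)) = p.map (algebraMap A (Localization.Away a)) := by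
  rw [snd_ofStage, map_dilation, map_pow, dilation_dilation, ← mul_pow, mul_comm,
    IsLocalization.Away.mul_invSelf, one_pow, dilation_one, RingHom.id_apply]

theorem ofStage_dilationSystem (i j : ℕ) (hij : i ≤ j) (p : A[X]) :
    ofStage a j (dilationSystem a i j hij p) = ofStage a i p := by
  obtain ⟨k, rfl⟩ := Nat.exists_eq_add_of_le hij
  refine ext ?_ ?_
  · rw [fst_ofStage, fst_ofStage, dilationSystem, eval_zero_dilation]
  · have hinv : IsLocalization.Away.invSelf a ^ (i + k) *
        algebraMap A (Localization.Away a) a ^ k = IsLocalization.Away.invSelf a ^ i := by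
      rw [pow_add, mul_assoc, ← mul_pow, mul_comm (IsLocalization.Away.invSelf a),
        IsLocalization.Away.mul_invSelf, one_pow, mul_one]
    rw [snd_ofStage, snd_ofStage, dilationSystem, map_dilation, dilation_dilation,
      Nat.add_sub_cancel_left, map_pow, hinv]

theorem exists_ofStage_eq (x : fiberRing A a) : ∃ N p, ofStage a N p = x := by
  obtain ⟨N, q, hq⟩ := exists_map_eq_C_pow_mul a (snd a x).divX
  refine ⟨N, X * dilation (a ^ N) q + C (fst a x), ext ?_ ?_⟩
  · simp [fst_ofStage]
  · calc snd a (ofStage a N (X * dilation (a ^ N) q + C (fst a x)))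
      _ = C (IsLocalization.Away.invSelf a ^ N) * X *
            q.map (algebraMap A (Localization.Away a)) + C ((snd a x).eval 0) := by
        rw [map_add, map_mul, map_add, map_mul, snd_ofStage_dilation, snd_ofStage, snd_ofStage,
          map_X, map_C, dilation_X, dilation_C, eval_zero_snd]
      _ = C ((algebraMap A (Localization.Away a) a * IsLocalization.Away.invSelf a) ^ N) *
            (X * (snd a x).divX) + C ((snd a x).eval 0) := by
        rw [hq, mul_pow, C_mul]
        ring
      _ = snd a x := by
        rw [IsLocalization.Away.mul_invSelf, one_pow, C_1, one_mul, ← coeff_zero_eq_eval_zero,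
          X_mul_divX_add]

theorem exists_dilationSystem_eq_zero {N : ℕ} {p : A[X]} (hp : ofStage a N p = 0) :
    ∃ M hNM, dilationSystem a N M hNM p = 0 := by
  obtain ⟨k, hk⟩ := exists_dilation_pow_eq_zero (S := Localization.Away a) a (p := p)
    (by rw [← fst_ofStage a N, hp, map_zero])
    (by rw [map_eq_dilation_snd_ofStage a N, hp, map_zero, map_zero])
  exact ⟨N + k, N.le_add_right k, by rwa [dilationSystem, Nat.add_sub_cancel_left]⟩

theorem bijective_lift_ofStage : Function.Bijective
    (DirectLimit.Ring.lift _ (dilationSystem a) _ (ofStage a) (ofStage_dilationSystem a)) := by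
  refine ⟨(injective_iff_map_eq_zero _).2 fun x hx ↦ ?_, fun x ↦ ?_⟩
  · induction x using DirectLimit.induction with | _ N p
    exact (DirectLimit.exists_eq_zero (G := fun _ ↦ A[X]) (f := dilationSystem a) ⟨N, p⟩).2
      (exists_dilationSystem_eq_zero a hx)
  · obtain ⟨N, p, rfl⟩ := exists_ofStage_eq a x
    exact ⟨⟦⟨N, p⟩⟧, rfl⟩

/-- The identification of `A ⋉ XA_a[X]` with the direct limit of `dilationSystem a`. -/
noncomputable def directLimitEquiv :
    DirectLimit (fun _ : ℕ ↦ A[X]) (dilationSystem a) ≃+* fiberRing A a :=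
  RingEquiv.ofBijective _ (bijective_lift_ofStage a)

theorem directLimitEquiv_symm_comp_ofStage (N : ℕ) :
    (directLimitEquiv a).symm.toRingHom.comp (ofStage a N) =
      DirectLimit.Ring.of _ (dilationSystem a) N :=
  RingHom.ext fun p ↦ (directLimitEquiv a).symm_apply_apply ⟦⟨N, p⟩⟧

end fiberRing

variable {n : ℕ} {A : Type} [CommRing A] {a : A}

theorem SteinbergGroup.exists_map_dilation_eq_one {g : SteinbergGroup n A[X]}
    (hg : map n (fiberRing.ofStage a 0) g = 1) : ∃ m : ℕ, map n (dilation (a ^ m)) g = 1 := by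
  have hlim : map n (DirectLimit.Ring.of _ (dilationSystem a) 0) g = 1 := by
    rw [← fiberRing.directLimitEquiv_symm_comp_ofStage, ← map_map, hg, map_one]
  obtain ⟨m, _, hm⟩ := exists_map_eq_one_of_map_of_eq_one hlim
  exact ⟨m, hm⟩

theorem TulenbaevLifting.eq_one_of_map_fst_of_map_snd (h : TulenbaevLifting n)
    (ha : ¬ IsNilpotent a) {x : SteinbergGroup n (fiberRing A a)}
    (hfst : SteinbergGroup.map n (fiberRing.fst a) x = 1)
    (hsnd : SteinbergGroup.map n (fiberRing.snd a) x = 1) : x = 1 := by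
  obtain ⟨T, -, hT⟩ := h A a ha _ (SteinbergGroup.map_stx (fiberRing.fst a))
    _ (SteinbergGroup.map_stx (fiberRing.snd a)) _
    (SteinbergGroup.map_stx (evalRingHom (0 : Localization.Away a)))
  have hker : SteinbergGroup.map n (fiberRing.snd a) x ∈
      (SteinbergGroup.map n (evalRingHom (0 : Localization.Away a))).ker :=
    hsnd ▸ one_mem _
  calc x = T ⟨_, hker⟩ := (hT x hfst hker).symm
    _ = T 1 := congrArg T (Subtype.ext hsnd)
    _ = 1 := map_one T

end FiberRing

theorem stmt2 (n : ℕ) (hn : 3 ≤ n) (h : TulenbaevLifting n) : DilationPrinciple n := by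
  intro A _ a ha g ev0 hev0 hg0 la hla hgla
  have hg : SteinbergGroup.map n (fiberRing.ofStage a 0) g = 1 := by
    refine h.eq_one_of_map_fst_of_map_snd ha ?_ ?_
    · rwa [SteinbergGroup.map_map, fiberRing.fst_comp_ofStage, ← SteinbergGroup.eq_map hev0]
    · rwa [SteinbergGroup.map_map, fiberRing.snd_comp_ofStage_zero, ← SteinbergGroup.eq_map hla]
  obtain ⟨m, hm⟩ := SteinbergGroup.exists_map_dilation_eq_one hg
  refine ⟨m, fun ev hev ↦ ?_⟩
  rwa [SteinbergGroup.eq_map (φ := dilation (a ^ m)) hev]
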